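/- If a_1, …, a_m is a nontrivial cycle of T of length m (i.e., a_i ≠ 1 for all i) with a_min ≥ 19·2^58 and m·log₂(1 + 1/(3·a_min)) > 1 (an α-loop), then m ≥ 11387806137299329586. -/

import Mathlib

/-- The Collatz odd-step map: `T x = (3x+1)/2^{v₂(3x+1)}`. -/
def T (x : ℕ) : ℕ := (3 * x + 1) / 2 ^ (padicValNat 2 (3 * x + 1))

/-!
Since `log (1 + y) ≤ y`, the α-loop condition gives `3 * a_min * log 2 < m`. If `m` were below the
claimed bound, then `a_min` would exceed `19 * 2 ^ 58` by less than `19 * 2 ^ 22`. But the least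
element of a cycle is never undercut by its own iterates, while a computation shows that every
number of this short interval is. The computation first discards the residue classes modulo
`2 ^ 13` on which a few steps already have a contracting effect. In each remaining class, it
iterates all members simultaneously, stored as the digits ("lanes") of one large number, so that a
single big-number operation acts on thousands of orbits.
-/

namespace Collatz

/-- The shortcut Collatz map, which halves `3 * x + 1` at once for odd `x`. Unlike `T`, it divides
by a fixed power of two, which is what makes simultaneous iteration possible. -/
def shortcut (x : ℕ) : ℕ := if x % 2 = 0 then x / 2 else (3 * x + 1) / 2

theorem shortcut_two_mul (x : ℕ) : shortcut (2 * x) = x := by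
  simp [shortcut]

theorem shortcut_lt_two_pow_succ {x s : ℕ} (hx : x < 2 ^ s) : shortcut x < 2 ^ (s + 1) := by
  unfold shortcut
  split_ifs <;> omega

section Cycles

theorem exists_shortcut_eq_two_pow_mul_T {x : ℕ} (hx : Odd x) :
    ∃ e, shortcut x = 2 ^ e * T x := by
  have two_dvd : 2 ∣ 3 * x + 1 := by obtain ⟨y, rfl⟩ := hx; omega
  have hT : 2 ^ padicValNat 2 (3 * x + 1) * T x = 3 * x + 1 :=
    Nat.mul_div_cancel' pow_padicValNat_dvd
  obtain ⟨e, he⟩ := Nat.exists_eq_add_of_le' (one_le_padicValNat_of_dvd (by omega) two_dvd)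
  refine ⟨e, ?_⟩
  rw [he, pow_succ', mul_assoc] at hT
  rw [shortcut, if_neg (Nat.odd_iff.mp hx ▸ one_ne_zero), ← hT, Nat.mul_div_cancel_left _ two_pos]

theorem exists_iterate_shortcut_eq_two_pow_mul {S : Set ℕ} (hodd : ∀ x ∈ S, Odd x)
    (hS : Set.MapsTo T S S) {n : ℕ} (hn : n ∈ S) (k : ℕ) :
    ∃ e, ∃ x ∈ S, shortcut^[k] n = 2 ^ e * x := by
  induction k with
  | zero => exact ⟨0, n, hn, by simp⟩
  | succ k ih =>
    obtain ⟨e, x, hx, hk⟩ := ih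
    rw [Function.iterate_succ_apply', hk]
    cases e with
    | zero =>
      obtain ⟨e, he⟩ := exists_shortcut_eq_two_pow_mul_T (hodd x hx)
      exact ⟨e, T x, hS hx, by rw [pow_zero, one_mul, he]⟩
    | succ e => exact ⟨e, x, hx, by rw [pow_succ', mul_assoc, shortcut_two_mul]⟩

theorem le_iterate_shortcut_of_isLeast {S : Set ℕ} (hodd : ∀ x ∈ S, Odd x)
    (hS : Set.MapsTo T S S) {n : ℕ} (hn : IsLeast S n) (k : ℕ) : n ≤ shortcut^[k] n := by
  obtain ⟨e, x, hx, hk⟩ := exists_iterate_shortcut_eq_two_pow_mul hodd hS hn.1 k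
  exact hk ▸ (hn.2 hx).trans (Nat.le_mul_of_pos_left x (by positivity))

theorem isLeast_image_inf' {ι α : Type*} [LinearOrder α] {s : Finset ι} (hs : s.Nonempty)
    (f : ι → α) : IsLeast (f '' s) (s.inf' hs f) := by
  obtain ⟨i, hi, h⟩ := Finset.exists_mem_eq_inf' hs f
  exact ⟨⟨i, hi, h.symm⟩, by rintro _ ⟨j, hj, rfl⟩; exact Finset.inf'_le f hj⟩

theorem mapsTo_image_Icc_of_cycle {α : Type*} {f : α → α} {m : ℕ} (hm : 1 ≤ m) {a : ℕ → α}
    (hstep : ∀ i, 1 ≤ i → i < m → a (i + 1) = f (a i)) (hloop : f (a m) = a 1) :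
    Set.MapsTo f (a '' Set.Icc 1 m) (a '' Set.Icc 1 m) := by
  rintro _ ⟨i, ⟨hi, him⟩, rfl⟩
  rcases him.lt_or_eq with hlt | rfl
  · exact ⟨i + 1, ⟨by omega, hlt⟩, hstep i hi hlt⟩
  · exact ⟨1, ⟨le_rfl, hm⟩, hloop.symm⟩

end Cycles

section Logarithms

theorem three_mul_log_two_lt_of_one_lt_mul_logb {m x : ℝ} (hm : 0 ≤ m) (hx : 0 < x)
    (h : 1 < m * Real.logb 2 (1 + 1 / (3 * x))) : 3 * x * Real.log 2 < m := by
  have log_le : Real.log (1 + 1 / (3 * x)) ≤ 1 / (3 * x) := by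
    linarith [Real.log_le_sub_one_of_pos (x := 1 + 1 / (3 * x)) (by positivity)]
  rw [Real.logb, ← mul_div_assoc, one_lt_div (Real.log_pos one_lt_two)] at h
  have log_two_lt : Real.log 2 < m / (3 * x) :=
    calc Real.log 2 < m * Real.log (1 + 1 / (3 * x)) := h
      _ ≤ m * (1 / (3 * x)) := by gcongr
      _ = m / (3 * x) := mul_one_div m (3 * x)
  rwa [lt_div_iff₀ (by positivity), mul_comm] at log_two_lt

-- The series for `log ((1 + x) / (1 - x))` at `x = 1 / 3`.
theorem log_two_gt_d20 : 0.69314718055994530941 < Real.log 2 := by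
  have h := Real.sum_range_le_log_div (x := 1 / 3) (by norm_num) (by norm_num) 24
  norm_num [Finset.sum_range_succ] at h
  norm_num
  linarith

theorem lt_of_one_lt_mul_logb {m n : ℕ} (hm : m < 11387806137299329586) (hn : 0 < n)
    (h : 1 < (m : ℝ) * Real.logb 2 (1 + 1 / (3 * (n : ℝ)))) :
    n < 19 * 2 ^ 58 + 19 * 2 ^ 22 := by
  by_contra! hle
  have hle' : (19 * 2 ^ 58 + 19 * 2 ^ 22 : ℝ) ≤ n := mod_cast hle
  have hm' : (m : ℝ) ≤ 11387806137299329585 := mod_cast Nat.le_of_lt_succ hm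
  have mul_log_lt :=
    three_mul_log_two_lt_of_one_lt_mul_logb m.cast_nonneg (Nat.cast_pos.mpr hn) h
  have : 3 * (19 * 2 ^ 58 + 19 * 2 ^ 22) * 0.69314718055994530941 ≤ 3 * n * Real.log 2 := by
    gcongr
    exact log_two_gt_d20.le
  norm_num at this
  linarith

end Logarithms

section Evaluation

/-- `force x f` is `f x`. The kernel substitutes arguments unevaluated; matching on `x` makes it
compute the numeral `x` before it is duplicated in the body of `f`. -/
def force {α : Type*} (x : ℕ) (f : ℕ → α) : α :=
  match x with
  | 0 => f 0
  | n + 1 => f (n + 1)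

theorem force_eq {α : Type*} (x : ℕ) (f : ℕ → α) : force x f = f x := by
  cases x <;> rfl

end Evaluation

section ResidueClasses

/-- Sufficient test for all `x ≡ c [MOD 2 ^ N]` with `x / 2 ^ N > t₀` to descend below themselves,
called with `n = N`, `r = 1`, `q = c`. After `j` steps, `2 ^ N * t + c` has become
`2 ^ (N - j) * r * t + q` with `r` a power of three, and the test looks for a `j ≤ N` at which the
coefficient of `t` is less than `2 ^ N`. -/
def residueDescends (N t₀ : ℕ) : ℕ → ℕ → ℕ → Bool
  | 0, _, _ => false
  | n + 1, r, q =>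
    force (if q % 2 = 0 then r else 3 * r) fun r' =>
    force (shortcut q) fun q' =>
      (2 ^ n * r' < 2 ^ N && q' ≤ t₀) || residueDescends N t₀ n r' q'

theorem shortcut_two_mul_add (y q : ℕ) :
    shortcut (2 * y + q) = (if q % 2 = 0 then y else 3 * y) + shortcut q := by
  unfold shortcut
  split_ifs <;> omega

theorem exists_iterate_shortcut_lt_of_residueDescends {N t₀ t : ℕ} (ht : t₀ < t) :
    ∀ {n r q : ℕ}, residueDescends N t₀ n r q = true →
      ∃ k, shortcut^[k] (2 ^ n * r * t + q) < 2 ^ N * t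
  | n + 1, r, q, h => by
    simp only [residueDescends, force_eq, Bool.or_eq_true, Bool.and_eq_true,
      decide_eq_true_eq] at h
    generalize hr : (if q % 2 = 0 then r else 3 * r) = r' at h
    have step : shortcut (2 ^ (n + 1) * r * t + q) = 2 ^ n * r' * t + shortcut q := by
      rw [show 2 ^ (n + 1) * r * t = 2 * (2 ^ n * r * t) by ring, shortcut_two_mul_add, ← hr]
      split_ifs <;> ring
    rcases h with ⟨coeff_lt, hq⟩ | h
    · refine ⟨1, ?_⟩
      rw [Function.iterate_one, step]
      calc 2 ^ n * r' * t + shortcut q < 2 ^ n * r' * t + t := by gcongr; omega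
        _ = (2 ^ n * r' + 1) * t := by ring
        _ ≤ 2 ^ N * t := by gcongr; exact coeff_lt
    · obtain ⟨k, hk⟩ := exists_iterate_shortcut_lt_of_residueDescends ht h
      exact ⟨k + 1, by rwa [Function.iterate_succ_apply, step]⟩

end ResidueClasses

section Lanes

/-- The number with `L` binary lanes of width `w`, the `i`-th lane holding `x i`. -/
def pack (w L : ℕ) (x : ℕ → ℕ) : ℕ := ∑ i ∈ Finset.range L, x i * (2 ^ w) ^ i

variable {w L : ℕ} {x y : ℕ → ℕ}

theorem pack_congr (h : ∀ i < L, x i = y i) : pack w L x = pack w L y :=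
  Finset.sum_congr rfl fun i hi => by rw [h i (Finset.mem_range.mp hi)]

theorem pack_add (w L : ℕ) (x y : ℕ → ℕ) :
    pack w L x + pack w L y = pack w L fun i => x i + y i := by
  simp only [pack, add_mul, Finset.sum_add_distrib]

theorem mul_pack (c w L : ℕ) (x : ℕ → ℕ) : c * pack w L x = pack w L fun i => c * x i := by
  simp only [pack, Finset.mul_sum, mul_assoc]

theorem pack_eq_zero_iff : pack w L x = 0 ↔ ∀ i < L, x i = 0 := by
  simp [pack]

theorem pack_succ (w L : ℕ) (x : ℕ → ℕ) :
    pack w (L + 1) x = x 0 + 2 ^ w * pack w L fun i => x (i + 1) := by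
  rw [mul_pack, pack, Finset.sum_range_succ', pow_zero, mul_one, add_comm, pack]
  simp only [pow_succ', mul_assoc, mul_left_comm]

theorem add_two_pow_mul_land {a b : ℕ} (ha : a < 2 ^ w) (hb : b < 2 ^ w) (c d : ℕ) :
    (a + 2 ^ w * c) &&& (b + 2 ^ w * d) = (a &&& b) + 2 ^ w * (c &&& d) := by
  have mod_eq : ((a + 2 ^ w * c) &&& (b + 2 ^ w * d)) % 2 ^ w = a &&& b := by
    simp only [Nat.and_mod_two_pow, Nat.add_mul_mod_self_left, Nat.mod_eq_of_lt ha,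
      Nat.mod_eq_of_lt hb]
  have div_eq : ((a + 2 ^ w * c) &&& (b + 2 ^ w * d)) / 2 ^ w = c &&& d := by
    simp only [Nat.and_div_two_pow, Nat.add_mul_div_left _ _ (Nat.two_pow_pos w),
      Nat.div_eq_of_lt ha, Nat.div_eq_of_lt hb, zero_add]
  rw [← mod_eq, ← div_eq, Nat.mod_add_div]

theorem pack_land (hx : ∀ i < L, x i < 2 ^ w) (hy : ∀ i < L, y i < 2 ^ w) :
    pack w L x &&& pack w L y = pack w L fun i => x i &&& y i := by
  induction L generalizing x y with
  | zero => simp [pack]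
  | succ L ih =>
    rw [pack_succ, pack_succ, pack_succ,
      add_two_pow_mul_land (hx 0 L.succ_pos) (hy 0 L.succ_pos),
      ih (fun i hi => hx (i + 1) (by omega)) (fun i hi => hy (i + 1) (by omega))]

theorem pack_one (hw : w ≠ 0) (L : ℕ) :
    pack w L (fun _ => 1) = ((2 ^ w) ^ L - 1) / (2 ^ w - 1) := by
  simp only [pack, one_mul]
  exact Nat.geomSum_eq (Nat.le_self_pow hw 2) L

theorem pack_id (hw : w ≠ 0) (L : ℕ) :
    pack w L (fun i => i) =
      (L * (2 ^ w) ^ L - 2 ^ w * pack w L fun _ => 1) / (2 ^ w - 1) := by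
  obtain ⟨b, hb⟩ : ∃ b, 2 ^ w = b + 1 := ⟨2 ^ w - 1, by have := Nat.two_pow_pos w; omega⟩
  have hb_pos : 0 < b := by have := Nat.one_lt_two_pow hw; omega
  have telescope : pack w L (fun i => i) * b + 2 ^ w * pack w L (fun _ => 1) =
      L * (2 ^ w) ^ L := by
    simp only [pack, hb]
    induction L with
    | zero => simp
    | succ L ih =>
      simp only [Finset.sum_range_succ, add_mul, mul_add, pow_succ] at ih ⊢
      linarith
  rw [← telescope, Nat.add_sub_cancel, hb, Nat.add_sub_cancel, Nat.mul_div_cancel _ hb_pos]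

theorem lt_two_pow_of_land_eq_zero {s z : ℕ} (hs : s ≤ w) (hz : z < 2 ^ w)
    (h : z &&& (2 ^ w - 2 ^ s) = 0) : z < 2 ^ s := by
  have hpow : 2 ^ w = 2 ^ s * 2 ^ (w - s) := by rw [← pow_add, Nat.add_sub_cancel' hs]
  have mask_div : (2 ^ w - 2 ^ s) / 2 ^ s = 2 ^ (w - s) - 1 := by
    rw [hpow, ← Nat.mul_sub_one, Nat.mul_div_cancel_left _ (Nat.two_pow_pos s)]
  have div_lt : z / 2 ^ s < 2 ^ (w - s) := Nat.div_lt_of_lt_mul (hpow ▸ hz)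
  have div_eq_zero : z / 2 ^ s = 0 := by
    rw [← Nat.and_two_pow_sub_one_of_lt_two_pow div_lt, ← mask_div, ← Nat.and_div_two_pow, h,
      Nat.zero_div]
  exact Nat.lt_of_div_eq_zero (Nat.two_pow_pos s) div_eq_zero

theorem lt_two_pow_of_pack_land_eq_zero {s : ℕ} (hs : s ≤ w) (hx : ∀ i < L, x i < 2 ^ w)
    (h : pack w L x &&& (2 ^ w - 2 ^ s) * pack w L (fun _ => 1) = 0) : ∀ i < L, x i < 2 ^ s := by
  have mask_lt : 2 ^ w - 2 ^ s < 2 ^ w := Nat.sub_lt (Nat.two_pow_pos w) (Nat.two_pow_pos s)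
  simp only [mul_pack, mul_one] at h
  rw [pack_land hx fun _ _ => mask_lt, pack_eq_zero_iff] at h
  exact fun i hi => lt_two_pow_of_land_eq_zero hs (hx i hi) (h i hi)

/-- The map `shortcut` in every lane of `X`, where `ones` has a `1` in each lane. With `p` the
parity of a lane `x`, the new lane is `(x + p) / 2 + p * x`; multiplying `p` by `2 ^ w - 1` turns
the product `p * x` into a bitwise conjunction. -/
def laneStep (w ones X : ℕ) : ℕ :=
  force X fun X =>
  force (X &&& ones) fun parity =>
    (X + parity) >>> 1 + (X &&& (2 ^ w - 1) * parity)

theorem half_add_land_parity {z : ℕ} (hz : z < 2 ^ w) :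
    (z + z % 2) / 2 + (z &&& (2 ^ w - 1) * (z % 2)) = shortcut z := by
  unfold shortcut
  rcases Nat.mod_two_eq_zero_or_one z with hpar | hpar
  · simp [hpar]
  · rw [hpar, mul_one, Nat.and_two_pow_sub_one_of_lt_two_pow hz, if_neg one_ne_zero]
    omega

theorem laneStep_pack (hw : w ≠ 0) (hx : ∀ i < L, x i < 2 ^ w) :
    laneStep w (pack w L fun _ => 1) (pack w L x) = pack w L fun i => shortcut (x i) := by
  have one_lt : 1 < 2 ^ w := Nat.one_lt_two_pow hw
  have parity : pack w L x &&& pack w L (fun _ => 1) = pack w L fun i => x i % 2 := by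
    simp only [pack_land hx fun _ _ => one_lt, Nat.and_one_is_mod]
  have half : pack w L (fun i => x i + x i % 2) >>> 1 =
      pack w L fun i => (x i + x i % 2) / 2 := by
    have double : pack w L (fun i => x i + x i % 2) =
        2 * pack w L fun i => (x i + x i % 2) / 2 := by
      rw [mul_pack]
      exact pack_congr fun i _ => by omega
    rw [double, Nat.shiftRight_one, Nat.mul_div_cancel_left _ two_pos]
  have fill_lt : ∀ i < L, (2 ^ w - 1) * (x i % 2) < 2 ^ w := fun i _ => by
    rcases Nat.mod_two_eq_zero_or_one (x i) with hpar | hpar <;> rw [hpar] <;> omega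
  simp only [laneStep, force_eq]
  rw [parity, pack_add, half, mul_pack, pack_land hx fill_lt, pack_add]
  exact pack_congr fun i hi => half_add_land_parity (hx i hi)

theorem iterate_laneStep_pack {s k : ℕ} (hsk : s + k ≤ w) (hx : ∀ i < L, x i < 2 ^ s) :
    (laneStep w (pack w L fun _ => 1))^[k] (pack w L x) =
      pack w L fun i => shortcut^[k] (x i) := by
  induction k generalizing s x with
  | zero => rfl
  | succ k ih =>
    have hx' : ∀ i < L, x i < 2 ^ w := fun i hi =>
      (hx i hi).trans_le (Nat.pow_le_pow_right two_pos (by omega))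
    rw [Function.iterate_succ_apply, laneStep_pack (by omega) hx',
      ih (s := s + 1) (by omega) fun i hi => shortcut_lt_two_pow_succ (hx i hi)]
    rfl

theorem iterate_shortcut_lt_two_pow {s z : ℕ} (hz : z < 2 ^ s) (k : ℕ) :
    shortcut^[k] z < 2 ^ (s + k) := by
  induction k with
  | zero => exact hz
  | succ k ih =>
    rw [Function.iterate_succ_apply']
    exact shortcut_lt_two_pow_succ ih

/-- Iterates `laneStep` in rounds of `k` steps until all lanes have only zero bits under the mask
`low`. It gives up when the bits under `safe`, at the top of each lane, are not all zero, as the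
next round could then overflow into the neighbouring lanes. -/
def lanesDescend (w k ones low safe : ℕ) : ℕ → ℕ → Bool
  | 0, _ => false
  | n + 1, X => force X fun X =>
      X &&& low == 0 ||
        (X &&& safe == 0 && lanesDescend w k ones low safe n ((laneStep w ones)^[k] X))

theorem exists_iterate_shortcut_lt_of_lanesDescend {s k : ℕ} (hs : s ≤ w) (hk : k ≤ w) (n : ℕ)
    (hx : ∀ i < L, x i < 2 ^ w)
    (h : lanesDescend w k (pack w L fun _ => 1) ((2 ^ w - 2 ^ s) * pack w L fun _ => 1)
      ((2 ^ w - 2 ^ (w - k)) * pack w L fun _ => 1) n (pack w L x) = true) :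
    ∀ i < L, ∃ j, shortcut^[j] (x i) < 2 ^ s := by
  induction n generalizing x with
  | zero => exact absurd h Bool.false_ne_true
  | succ n ih =>
    simp only [lanesDescend, force_eq, Bool.or_eq_true, Bool.and_eq_true, beq_iff_eq] at h
    rcases h with low_eq | ⟨safe_eq, h⟩
    · exact fun i hi => ⟨0, lt_two_pow_of_pack_land_eq_zero hs hx low_eq i hi⟩
    · have hx_safe := lt_two_pow_of_pack_land_eq_zero (Nat.sub_le w k) hx safe_eq
      have hwk : w - k + k = w := Nat.sub_add_cancel hk
      rw [iterate_laneStep_pack hwk.le hx_safe] at h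
      intro i hi
      obtain ⟨j, hj⟩ :=
        ih (fun i hi => hwk ▸ iterate_shortcut_lt_two_pow (hx_safe i hi) k) h i hi
      exact ⟨j + k, by rwa [Function.iterate_add_apply]⟩

/-- Sufficient test, with at most `n` rounds of `k` steps in lanes of width `w`, for all
`b + d * i` with `i < L` to descend below `2 ^ s`. -/
def progressionDescends (w s k n b d L : ℕ) : Bool :=
  force ((2 ^ w) ^ L) fun B =>
  force ((B - 1) / (2 ^ w - 1)) fun ones =>
  force ((L * B - 2 ^ w * ones) / (2 ^ w - 1)) fun indices =>
  force ((2 ^ w - 2 ^ s) * ones) fun low =>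
  force ((2 ^ w - 2 ^ (w - k)) * ones) fun safe =>
    lanesDescend w k ones low safe n (b * ones + d * indices)

theorem exists_iterate_shortcut_lt_of_progressionDescends {s k n b d : ℕ} (hw : w ≠ 0)
    (hs : s ≤ w) (hk : k ≤ w) (hb : b + d * L < 2 ^ w)
    (h : progressionDescends w s k n b d L = true) :
    ∀ i < L, ∃ j, shortcut^[j] (b + d * i) < 2 ^ s := by
  simp only [progressionDescends, force_eq, ← pack_one hw, ← pack_id hw, mul_pack b, mul_pack d,
    pack_add, mul_one] at h
  refine exists_iterate_shortcut_lt_of_lanesDescend hs hk n (fun i hi => ?_) h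
  exact (Nat.add_le_add_left (Nat.mul_le_mul_left d hi.le) b).trans_lt hb

end Lanes

section Interval

/-- Sufficient test for all `x ≡ c [MOD 2 ^ 13]` with
`19 * 2 ^ 58 ≤ x < 19 * 2 ^ 58 + 19 * 2 ^ 22` to descend below themselves. Lanes of width `104`
leave room for the largest values that occur and keep `9728 = 19 * 2 ^ 22 / 2 ^ 13` lanes within
`128` kilobytes. -/
def residueSettled (c : ℕ) : Bool :=
  residueDescends 13 (2 ^ 40) 13 1 c ||
    progressionDescends 104 62 16 60 (19 * 2 ^ 58 + c) (2 ^ 13) 9728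

set_option maxRecDepth 100000 in
set_option maxHeartbeats 0 in
-- The heartbeats of the 1024 separate computations add up.
theorem all_residueSettled_of_lt :
    ∀ j < 1024, (List.range 8).all (fun i => residueSettled (8 * j + i)) = true := by
  intro j hj
  interval_cases j <;> decide +kernel

theorem residueSettled_of_lt {c : ℕ} (hc : c < 2 ^ 13) : residueSettled c = true := by
  have h := List.all_eq_true.mp (all_residueSettled_of_lt (c / 8) (by omega)) (c % 8)
    (List.mem_range.mpr (Nat.mod_lt c (by norm_num)))
  rwa [Nat.div_add_mod] at h

theorem exists_iterate_shortcut_lt_self {n : ℕ} (hlow : 19 * 2 ^ 58 ≤ n)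
    (hhigh : n < 19 * 2 ^ 58 + 19 * 2 ^ 22) : ∃ k, shortcut^[k] n < n := by
  obtain ⟨c, t, hc, ht, rfl⟩ :
      ∃ c t, c < 2 ^ 13 ∧ t < 9728 ∧ n = 19 * 2 ^ 58 + c + 2 ^ 13 * t :=
    ⟨n % 2 ^ 13, (n - 19 * 2 ^ 58) / 2 ^ 13, by omega, by omega, by omega⟩
  rcases Bool.or_eq_true_iff.mp (residueSettled_of_lt hc) with h | h
  · obtain ⟨k, hk⟩ :=
      exists_iterate_shortcut_lt_of_residueDescends (t := 19 * 2 ^ 45 + t) (by omega) h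
    rw [show 2 ^ 13 * 1 * (19 * 2 ^ 45 + t) + c = 19 * 2 ^ 58 + c + 2 ^ 13 * t by ring] at hk
    exact ⟨k, hk.trans_le (by omega)⟩
  · obtain ⟨k, hk⟩ := exists_iterate_shortcut_lt_of_progressionDescends (by norm_num)
      (by norm_num) (by norm_num) (by omega) h t ht
    exact ⟨k, hk.trans (by omega)⟩

end Interval

end Collatz

theorem stmt_11 (m : ℕ) (hm : 1 ≤ m) (a : ℕ → ℕ)
    (hpos : ∀ i, 1 ≤ i → i ≤ m → 0 < a i)
    (hodd : ∀ i, 1 ≤ i → i ≤ m → Odd (a i))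
    (hstep : ∀ i, 1 ≤ i → i < m → a (i + 1) = T (a i))
    (hloop : T (a m) = a 1)
    (hnontriv : ∀ i, 1 ≤ i → i ≤ m → a i ≠ 1)
    (amin : ℕ)
    (hamin : amin = (Finset.Icc 1 m).inf' (Finset.nonempty_Icc.mpr hm) a)
    (hbig : 19 * 2 ^ 58 ≤ amin)
    (halpha : (m : ℝ) * Real.logb 2 (1 + 1 / (3 * (amin : ℝ))) > 1) :
    11387806137299329586 ≤ m := by
  by_contra! hlt
  have cycle_odd : ∀ x ∈ a '' Set.Icc 1 m, Odd x := by
    rintro _ ⟨i, hi, rfl⟩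
    exact hodd i hi.1 hi.2
  have amin_isLeast : IsLeast (a '' Set.Icc 1 m) amin := by
    rw [hamin, ← Finset.coe_Icc]
    exact Collatz.isLeast_image_inf' (Finset.nonempty_Icc.mpr hm) a
  have amin_lt := Collatz.lt_of_one_lt_mul_logb hlt (by omega) halpha
  obtain ⟨k, hk⟩ := Collatz.exists_iterate_shortcut_lt_self hbig amin_lt
  have amin_le := Collatz.le_iterate_shortcut_of_isLeast cycle_odd
    (Collatz.mapsTo_image_Icc_of_cycle hm hstep hloop) amin_isLeast k
  exact hk.not_ge amin_le
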